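/- arXiv:0704.2500 — 3 statements merged into one kernel-verified Lean document; each statement's English description precedes it below -/
import Mathlib

section
/- Let p ∈ [1,∞] and suppose the probe set is Ψ̂ := {ψ_g : g ∈ G} with ψ_g := (‖g‖_p/‖g‖_2²)·g (so that ∫ψ_g g = ‖g‖_p for every g ∈ G). Run the aggregation procedure of the context with δ = ε and κ = √(2 ln(N²/ε)). Then E‖f̂ − f‖_p ≤ (2Q₂(p) + 1)·min_{i∈I_N} ‖f_i − f‖_p + 2Q₃(p)·ε·√(2 ln(N²/ε)) + 2Lε, where Q₂(p) = max_{i∈I_N, i≠i*} ‖f_{i*} − f_i‖_p·‖f_{i*} − f_i‖_q/‖f_{i*} − f_i‖_2² and Q₃(p) = max_{i∈I_N, i≠i*} ‖f_{i*} − f_i‖_p/‖f_{i*} − f_i‖_2. -/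
open MeasureTheory
open scoped ENNReal

/-- Lebesgue measure restricted to the unit cube `[0,1]^d`. -/
noncomputable def cubeMeasure (d : ℕ) : Measure (Fin d → ℝ) :=
  volume.restrict (Set.Icc 0 1)

/-- The real-valued `L^r` norm on the unit cube. -/
noncomputable def Lnorm {d : ℕ} (r : ℝ≥0∞) (g : (Fin d → ℝ) → ℝ) : ℝ :=
  (eLpNorm g r (cubeMeasure d)).toReal

section helpers
variable {d : ℕ}

lemma aux_nonneg (r : ℝ≥0∞) (g : (Fin d → ℝ) → ℝ) : 0 ≤ Lnorm r g := ENNReal.toReal_nonneg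

lemma aux_comm (r : ℝ≥0∞) (g h : (Fin d → ℝ) → ℝ) :
    Lnorm r (fun t => g t - h t) = Lnorm r (fun t => h t - g t) := by
  unfold Lnorm
  exact congrArg ENNReal.toReal (eLpNorm_sub_comm g h r _)

lemma aux_smul (r : ℝ≥0∞) (c : ℝ) (hc : 0 ≤ c) (g : (Fin d → ℝ) → ℝ) :
    Lnorm r (fun t => c * g t) = c * Lnorm r g := by
  unfold Lnorm
  have := eLpNorm_const_smul c g r (cubeMeasure d)
  change eLpNorm (fun t => c * g t) r (cubeMeasure d) = _ at this
  rw [this, ENNReal.toReal_mul]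
  simp [abs_of_nonneg hc]

lemma aux_sub_le (r : ℝ≥0∞) (hr : 1 ≤ r) (g h : (Fin d → ℝ) → ℝ) (hgm : Measurable g)
    (hhm : Measurable h) (hg : eLpNorm g r (cubeMeasure d) ≠ ⊤)
    (hh : eLpNorm h r (cubeMeasure d) ≠ ⊤) :
    Lnorm r (fun t => g t - h t) ≤ Lnorm r g + Lnorm r h := by
  unfold Lnorm
  rw [← ENNReal.toReal_add hg hh]
  exact ENNReal.toReal_mono (ENNReal.add_ne_top.2 ⟨hg, hh⟩)
    (eLpNorm_sub_le hgm.aestronglyMeasurable hhm.aestronglyMeasurable hr)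

lemma aux_sub_fin (r : ℝ≥0∞) (g h : (Fin d → ℝ) → ℝ) (hgm : Measurable g)
    (hhm : Measurable h) (hg : eLpNorm g r (cubeMeasure d) ≠ ⊤)
    (hh : eLpNorm h r (cubeMeasure d) ≠ ⊤) :
    eLpNorm (fun t => g t - h t) r (cubeMeasure d) ≠ ⊤ :=
  (MemLp.sub (⟨hgm.aestronglyMeasurable, hg.lt_top⟩ : MemLp g r (cubeMeasure d))
    ⟨hhm.aestronglyMeasurable, hh.lt_top⟩).2.ne

lemma aux_holder (p q : ℝ≥0∞) (hpq : 1 / p + 1 / q = 1) (g h : (Fin d → ℝ) → ℝ)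
    (hgm : Measurable g) (hhm : Measurable h) (hg : eLpNorm g q (cubeMeasure d) ≠ ⊤)
    (hh : eLpNorm h p (cubeMeasure d) ≠ ⊤) :
    Integrable (fun t => g t * h t) (cubeMeasure d) ∧
    |∫ t, g t * h t ∂(cubeMeasure d)| ≤ Lnorm q g * Lnorm p h := by
  have : ENNReal.HolderTriple q p 1 := ⟨by simpa [add_comm] using hpq⟩
  have h1 : Integrable (fun t => g t * h t) (cubeMeasure d) := by
    rw [← memLp_one_iff_integrable]
    exact MemLp.mul' (⟨hhm.aestronglyMeasurable, hh.lt_top⟩ : MemLp h p (cubeMeasure d))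
      ⟨hgm.aestronglyMeasurable, hg.lt_top⟩
  refine ⟨h1, ?_⟩
  have h2 := eLpNorm_smul_le_mul_eLpNorm (p := q) (q := p) (r := 1) (μ := cubeMeasure d)
    (f := h) (φ := g) hhm.aestronglyMeasurable hgm.aestronglyMeasurable
  have h2e : g • h = fun t => g t * h t := rfl
  rw [h2e] at h2
  have h3 : |∫ t, g t * h t ∂(cubeMeasure d)| ≤
      (eLpNorm (fun t => g t * h t) 1 (cubeMeasure d)).toReal := by
    rw [eLpNorm_one_eq_lintegral_enorm, ← integral_norm_eq_lintegral_enorm h1.1,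
      ← Real.norm_eq_abs]
    exact norm_integral_le_integral_norm _
  refine h3.trans ?_
  unfold Lnorm
  rw [← ENNReal.toReal_mul]
  exact ENNReal.toReal_mono (ENNReal.mul_ne_top hg hh) h2

lemma aux_sq (g : (Fin d → ℝ) → ℝ) (hgm : Measurable g)
    (hg : eLpNorm g 2 (cubeMeasure d) ≠ ⊤) :
    ∫ t, g t * g t ∂(cubeMeasure d) = Lnorm 2 g ^ 2 := by
  have hm : MemLp g 2 (cubeMeasure d) := ⟨hgm.aestronglyMeasurable, hg.lt_top⟩
  unfold Lnorm
  rw [hm.eLpNorm_eq_integral_rpow_norm (by simp) (by simp)]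
  have h0 : 0 ≤ ∫ t, g t * g t ∂(cubeMeasure d) := integral_nonneg fun t => mul_self_nonneg _
  have h1 : ∫ t, ‖g t‖ ^ (2 : ℝ≥0∞).toReal ∂(cubeMeasure d) = ∫ t, g t * g t ∂(cubeMeasure d) := by
    congr 1; ext t; simp [pow_two]
  rw [h1, ENNReal.toReal_ofReal (by positivity), ← Real.rpow_natCast, ← Real.rpow_mul h0]
  simp

lemma aux_pos (r s : ℝ≥0∞) (hr : r ≠ 0) (hs : s ≠ 0) (g : (Fin d → ℝ) → ℝ) (hgm : Measurable g)
    (h2 : 0 < Lnorm s g) (hg : eLpNorm g r (cubeMeasure d) ≠ ⊤) : 0 < Lnorm r g := by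
  refine ENNReal.toReal_pos (fun h => ?_) hg
  rw [eLpNorm_eq_zero_iff hgm.aestronglyMeasurable hr] at h
  have := (eLpNorm_eq_zero_iff hgm.aestronglyMeasurable hs).2 h
  simp [Lnorm, this] at h2

lemma aux_tail {Ω : Type} [MeasurableSpace Ω] (P : Measure Ω) [IsProbabilityMeasure P]
    (X : Ω → ℝ) (hX : Measurable X) (s : NNReal) (hs : 0 < s)
    (h : Measure.map X P = ProbabilityTheory.gaussianReal 0 (s ^ 2)) (κ : ℝ) (hκ : 0 ≤ κ) :
    P.real {ω | κ * s < X ω} ≤ Real.exp (-κ ^ 2 / 2) := by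
  have hsub : ProbabilityTheory.HasSubgaussianMGF X (s ^ 2) P := by
    constructor
    · intro t
      have := ProbabilityTheory.integrable_exp_mul_gaussianReal (μ := 0) (v := s ^ 2) t
      rw [← h, integrable_map_measure (by fun_prop) hX.aemeasurable] at this
      exact this
    · intro t
      rw [ProbabilityTheory.mgf_gaussianReal h]
      simp
  have h1 := hsub.measure_ge_le (ε := κ * s) (by positivity)
  have h2 : P.real {ω | κ * s < X ω} ≤ P.real {ω | κ * s ≤ X ω} :=
    measureReal_mono (Set.ofPred_subset_ofPred.2 fun ω hω => le_of_lt hω)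
  refine h2.trans (h1.trans (le_of_eq ?_))
  have : (s : ℝ) ≠ 0 := by positivity
  congr 1
  push_cast
  field_simp

end helpers

/-- Corollary 2 of the paper: oracle inequality for the aggregation
procedure with the `(0,p)`-good probe set `Ψ̂ = {(‖g‖_p/‖g‖₂²)·g : g ∈ G}`,
`δ = ε` and `κ = √(2 ln(N²/ε))`. -/
theorem stmt_4
    {d N : ℕ} (hd : 1 ≤ d) (hN : 2 ≤ N)
    (p q : ℝ≥0∞) (hp : 1 ≤ p) (hpq : 1 / p + 1 / q = 1)
    (f : (Fin d → ℝ) → ℝ) (F : Fin N → (Fin d → ℝ) → ℝ)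
    (hfm : Measurable f) (hFm : ∀ i, Measurable (F i))
    (hf : eLpNorm f p (cubeMeasure d) ≠ ⊤)
    (hF : ∀ i, eLpNorm (F i) p (cubeMeasure d) ≠ ⊤)
    -- pairwise differences have nonzero finite `L²` norms and finite `L^p`, `L^q` norms
    (hFdist : ∀ i j, i ≠ j → 0 < Lnorm 2 (fun t => F i t - F j t))
    (hdiff2 : ∀ i j, i ≠ j → eLpNorm (fun t => F i t - F j t) 2 (cubeMeasure d) ≠ ⊤)
    (hdiffp : ∀ i j, i ≠ j → eLpNorm (fun t => F i t - F j t) p (cubeMeasure d) ≠ ⊤)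
    (hdiffq : ∀ i j, i ≠ j → eLpNorm (fun t => F i t - F j t) q (cubeMeasure d) ≠ ⊤)
    (L : ℝ) (hL : L = max (Lnorm p f) (⨆ i, Lnorm p (F i)))
    (ε : ℝ) (hε0 : 0 < ε) (hε1 : ε < 1)
    -- the probe functions `ψ_{ij} = (‖f_i - f_j‖_p / ‖f_i - f_j‖₂²)·(f_i - f_j)`
    (ψ : Fin N → Fin N → (Fin d → ℝ) → ℝ)
    (hψdef : ∀ i j, i ≠ j → ∀ t, ψ i j t =
      Lnorm p (fun u => F i u - F j u) / (Lnorm 2 (fun u => F i u - F j u)) ^ 2 *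
        (F i t - F j t))
    {Ω : Type} [MeasurableSpace Ω] (P : Measure Ω) [IsProbabilityMeasure P]
    (Z : Fin N → Fin N → Ω → ℝ) (hZm : ∀ i j, Measurable (Z i j))
    (hZlaw : ∀ i j, i ≠ j → Measure.map (Z i j) P =
      ProbabilityTheory.gaussianReal 0 ((eLpNorm (ψ i j) 2 (cubeMeasure d)).toNNReal ^ 2))
    (hZanti : ∀ i j, i ≠ j → ∀ᵐ ω ∂P, Z j i ω = - Z i j ω)
    (κ : ℝ) (hκ : κ = Real.sqrt (2 * Real.log ((N : ℝ) ^ 2 / ε)))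
    (Mhat : Fin N → Ω → ℝ)
    (hM : ∀ i ω, Mhat i ω =
      ⨆ jl : {jl : Fin N × Fin N // jl.1 ≠ jl.2},
        (|(∫ t, ψ jl.1.1 jl.1.2 t * (f t - F i t) ∂(cubeMeasure d)) +
            ε * Z jl.1.1 jl.1.2 ω| - ε * κ * Lnorm 2 (ψ jl.1.1 jl.1.2)) /
          Lnorm q (ψ jl.1.1 jl.1.2))
    (ihat : Ω → Fin N) (hihatm : Measurable ihat)
    (hmin : ∀ ω i, Mhat (ihat ω) ω ≤ Mhat i ω)
    (istar : Fin N)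
    (histar : ∀ i, Lnorm p (fun t => f t - F istar t) ≤ Lnorm p (fun t => f t - F i t)) :
    ∫ ω, Lnorm p (fun t => F (ihat ω) t - f t) ∂P ≤
      (2 * (⨆ j : {j : Fin N // j ≠ istar},
          Lnorm p (fun t => F istar t - F j.1 t) * Lnorm q (fun t => F istar t - F j.1 t) /
            (Lnorm 2 (fun t => F istar t - F j.1 t)) ^ 2) + 1) *
        (⨅ i, Lnorm p (fun t => F i t - f t))
      + 2 * (⨆ j : {j : Fin N // j ≠ istar},
          Lnorm p (fun t => F istar t - F j.1 t) / Lnorm 2 (fun t => F istar t - F j.1 t)) *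
          ε * Real.sqrt (2 * Real.log ((N : ℝ) ^ 2 / ε))
      + 2 * L * ε := by
  have hq0 : q ≠ 0 := by
    rintro rfl
    simp at hpq
  have hp0 : p ≠ 0 := (zero_lt_one.trans_le hp).ne'
  have hgm : ∀ i j, Measurable (fun t => F i t - F j t) := fun i j => (hFm i).sub (hFm j)
  have hψeq : ∀ i j, i ≠ j → ψ i j = fun t =>
      (Lnorm p (fun u => F i u - F j u) / (Lnorm 2 (fun u => F i u - F j u)) ^ 2) *
        (F i t - F j t) := fun i j h => funext (hψdef i j h)
  have hc0 : ∀ i j, 0 ≤ Lnorm p (fun u => F i u - F j u) /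
      (Lnorm 2 (fun u => F i u - F j u)) ^ 2 := fun i j =>
    div_nonneg (aux_nonneg _ _) (sq_nonneg _)
  have hψr : ∀ r i j, i ≠ j → Lnorm r (ψ i j) = (Lnorm p (fun u => F i u - F j u) /
      (Lnorm 2 (fun u => F i u - F j u)) ^ 2) * Lnorm r (fun u => F i u - F j u) := by
    intro r i j h
    rw [hψeq i j h, aux_smul r _ (hc0 i j)]
  have hψm : ∀ i j, i ≠ j → Measurable (ψ i j) := by
    intro i j h
    rw [hψeq i j h]
    exact (hgm i j).const_mul _
  have hgp : ∀ i j, i ≠ j → 0 < Lnorm p (fun u => F i u - F j u) := fun i j h =>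
    aux_pos p 2 hp0 (by simp) _ (hgm i j) (hFdist i j h) (hdiffp i j h)
  have hgq : ∀ i j, i ≠ j → 0 < Lnorm q (fun u => F i u - F j u) := fun i j h =>
    aux_pos q 2 hq0 (by simp) _ (hgm i j) (hFdist i j h) (hdiffq i j h)
  have hψpos : ∀ r i j, i ≠ j → 0 < Lnorm r (fun u => F i u - F j u) → 0 < Lnorm r (ψ i j) := by
    intro r i j h hr
    rw [hψr r i j h]
    exact mul_pos (div_pos (hgp i j h) (pow_pos (hFdist i j h) 2)) hr
  have hψq : ∀ i j, i ≠ j → eLpNorm (ψ i j) q (cubeMeasure d) ≠ ⊤ := fun i j h h' => by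
    have := hψpos q i j h (hgq i j h)
    simp [Lnorm, h'] at this
  have hfF : ∀ i, eLpNorm (fun t => f t - F i t) p (cubeMeasure d) ≠ ⊤ := fun i =>
    aux_sub_fin p _ _ hfm (hFm i) hf (hF i)
  have hhol : ∀ i j k, i ≠ j → Integrable (fun t => ψ i j t * (f t - F k t)) (cubeMeasure d) ∧
      |∫ t, ψ i j t * (f t - F k t) ∂(cubeMeasure d)| ≤
        Lnorm q (ψ i j) * Lnorm p (fun t => f t - F k t) := fun i j k h =>
    aux_holder p q hpq _ _ (hψm i j h) (hfm.sub (hFm k)) (hψq i j h) (hfF k)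
  have hψsymm : ∀ i j, i ≠ j → Lnorm 2 (ψ j i) = Lnorm 2 (ψ i j) := by
    intro i j h
    rw [hψr 2 i j h, hψr 2 j i h.symm, aux_comm p (F j) (F i), aux_comm 2 (F j) (F i)]
  have hκ0 : 0 ≤ κ := hκ ▸ Real.sqrt_nonneg _
  have hNpos : (0 : ℝ) < N := by exact_mod_cast (by omega : 0 < N)
  have hexp : Real.exp (-κ ^ 2 / 2) = ε / (N : ℝ) ^ 2 := by
    have h1 : 0 ≤ Real.log ((N : ℝ) ^ 2 / ε) := by
      apply Real.log_nonneg
      rw [le_div_iff₀ hε0]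
      have : (1 : ℝ) ≤ N := by exact_mod_cast (by omega : 1 ≤ N)
      nlinarith
    rw [hκ, Real.sq_sqrt (by positivity)]
    rw [show -(2 * Real.log ((N : ℝ) ^ 2 / ε)) / 2 = -Real.log ((N : ℝ) ^ 2 / ε) by ring,
      Real.exp_neg, Real.exp_log (by positivity), inv_div]
  set m := Lnorm p (fun t => f t - F istar t) with hm
  have hm0 : 0 ≤ m := aux_nonneg _ _
  rw [← hκ]
  set Q2 := (⨆ j : {j : Fin N // j ≠ istar},
          Lnorm p (fun t => F istar t - F j.1 t) * Lnorm q (fun t => F istar t - F j.1 t) /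
            (Lnorm 2 (fun t => F istar t - F j.1 t)) ^ 2) with hQ2
  set Q3 := (⨆ j : {j : Fin N // j ≠ istar},
          Lnorm p (fun t => F istar t - F j.1 t) / Lnorm 2 (fun t => F istar t - F j.1 t)) with hQ3
  have hQ20 : 0 ≤ Q2 := Real.iSup_nonneg fun j =>
    div_nonneg (mul_nonneg (aux_nonneg _ _) (aux_nonneg _ _)) (sq_nonneg _)
  have hQ30 : 0 ≤ Q3 := Real.iSup_nonneg fun j => div_nonneg (aux_nonneg _ _) (aux_nonneg _ _)
  have hQ2le : ∀ j, j ≠ istar → Lnorm q (ψ istar j) ≤ Q2 := by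
    intro j hj
    rw [hψr q istar j hj.symm, div_mul_eq_mul_div]
    exact le_ciSup (f := fun j : {j : Fin N // j ≠ istar} =>
      Lnorm p (fun t => F istar t - F j.1 t) * Lnorm q (fun t => F istar t - F j.1 t) /
            (Lnorm 2 (fun t => F istar t - F j.1 t)) ^ 2) (Set.finite_range _).bddAbove ⟨j, hj⟩
  have hQ3le : ∀ j, j ≠ istar → Lnorm 2 (ψ istar j) ≤ Q3 := by
    intro j hj
    have h2 := hFdist istar j hj.symm
    rw [hψr 2 istar j hj.symm]
    have := le_ciSup (f := fun j : {j : Fin N // j ≠ istar} =>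
      Lnorm p (fun t => F istar t - F j.1 t) / Lnorm 2 (fun t => F istar t - F j.1 t))
      (Set.finite_range _).bddAbove ⟨j, hj⟩
    refine le_trans (le_of_eq ?_) this
    field_simp
  have hself : ∀ j, j ≠ istar → Lnorm p (fun t => F istar t - F j t) =
      (∫ t, ψ istar j t * (f t - F j t) ∂(cubeMeasure d)) -
      ∫ t, ψ istar j t * (f t - F istar t) ∂(cubeMeasure d) := by
    intro j hj
    rw [← integral_sub (hhol istar j j hj.symm).1 (hhol istar j istar hj.symm).1]
    have h1 : ∀ t, ψ istar j t * (f t - F j t) - ψ istar j t * (f t - F istar t) =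
        (Lnorm p (fun u => F istar u - F j u) / (Lnorm 2 (fun u => F istar u - F j u)) ^ 2) *
        ((F istar t - F j t) * (F istar t - F j t)) := by
      intro t
      rw [hψdef istar j hj.symm]
      ring
    simp_rw [h1]
    rw [integral_const_mul, aux_sq _ (hgm istar j) (hdiff2 istar j hj.symm)]
    have h2 := hFdist istar j hj.symm
    field_simp
  -- deterministic bound on the good event
  have hgood : ∀ ω, (∀ i j, i ≠ j → |Z i j ω| ≤ κ * Lnorm 2 (ψ i j)) →
      Lnorm p (fun t => F (ihat ω) t - f t) ≤ (2 * Q2 + 1) * m + 2 * Q3 * ε * κ := by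
    intro ω hω
    by_cases hj : ihat ω = istar
    · rw [hj, aux_comm p (F istar) f, ← hm]
      have : 0 ≤ 2 * Q2 * m + 2 * Q3 * ε * κ := by positivity
      linarith
    · have hMstar : Mhat istar ω ≤ m := by
        rw [hM]
        refine Real.iSup_le ?_ hm0
        rintro ⟨⟨a, b⟩, hab⟩
        simp only at hab ⊢
        rw [div_le_iff₀ (hψpos q a b hab (hgq a b hab))]
        have h1 := (hhol a b istar hab).2
        have h2 := abs_add_le (∫ t, ψ a b t * (f t - F istar t) ∂(cubeMeasure d)) (ε * Z a b ω)
        rw [abs_mul, abs_of_pos hε0] at h2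
        have h3 := mul_le_mul_of_nonneg_left (hω a b hab) hε0.le
        rw [← hm] at h1
        linarith
      have hMj : Mhat (ihat ω) ω ≤ m := (hmin ω istar).trans hMstar
      generalize ihat ω = j at hj hMj
      have hj' : istar ≠ j := fun h => hj h.symm
      have h1 : (|(∫ t, ψ istar j t * (f t - F j t) ∂(cubeMeasure d)) +
            ε * Z istar j ω| - ε * κ * Lnorm 2 (ψ istar j)) / Lnorm q (ψ istar j) ≤ m := by
        refine le_trans ?_ hMj
        rw [hM]
        exact le_ciSup (f := fun jl : {jl : Fin N × Fin N // jl.1 ≠ jl.2} =>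
          (|(∫ t, ψ jl.1.1 jl.1.2 t * (f t - F j t) ∂(cubeMeasure d)) +
            ε * Z jl.1.1 jl.1.2 ω| - ε * κ * Lnorm 2 (ψ jl.1.1 jl.1.2)) /
          Lnorm q (ψ jl.1.1 jl.1.2)) (Set.finite_range _).bddAbove ⟨(istar, j), hj'⟩
      rw [div_le_iff₀ (hψpos q istar j hj' (hgq istar j hj'))] at h1
      have h2 := le_abs_self ((∫ t, ψ istar j t * (f t - F j t) ∂(cubeMeasure d)) +
            ε * Z istar j ω)
      have h3 := mul_le_mul_of_nonneg_left (neg_le_of_abs_le (hω istar j hj')) hε0.le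
      have h4 := neg_le_of_abs_le (hhol istar j istar hj').2
      rw [← hm] at h4
      have h5 := hself j hj
      have h6 := mul_le_mul_of_nonneg_left (hQ2le j hj) hm0
      have h7 := mul_le_mul_of_nonneg_left (hQ3le j hj) (mul_nonneg hε0.le hκ0)
      have h8 : Lnorm p (fun t => F j t - f t) ≤ m + Lnorm p (fun t => F istar t - F j t) := by
        rw [aux_comm p (F j) f]
        have h := aux_sub_le p hp (fun t => f t - F istar t) (fun t => F j t - F istar t)
          (hfm.sub (hFm istar)) (hgm j istar) (hfF istar) (hdiffp j istar hj)
        rw [aux_comm p (F j) (F istar)] at h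
        simpa using h
      nlinarith
  -- crude bound
  have hbddF : BddAbove (Set.range fun i => Lnorm p (F i)) := (Set.finite_range _).bddAbove
  have hLf : Lnorm p f ≤ L := hL ▸ le_max_left _ _
  have hLF : ∀ i, Lnorm p (F i) ≤ L := fun i =>
    (le_ciSup hbddF i).trans (hL ▸ le_max_right _ _)
  have hL0 : 0 ≤ L := (aux_nonneg _ _).trans hLf
  have hcrude : ∀ i, Lnorm p (fun t => F i t - f t) ≤ 2 * L := fun i => by
    have := aux_sub_le p hp (F i) f (hFm i) hfm (hF i) hf
    linarith [hLF i]
  set B := (2 * Q2 + 1) * m + 2 * Q3 * ε * κ with hB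
  have hB0 : 0 ≤ B := by positivity
  -- the bad event
  let bad : Fin N × Fin N → Set Ω := fun ij =>
    {ω | ij.1 ≠ ij.2 ∧ κ * Lnorm 2 (ψ ij.1 ij.2) < Z ij.1 ij.2 ω}
  have hbadm : ∀ ij, MeasurableSet (bad ij) := fun ij =>
    (MeasurableSet.const _).inter (measurableSet_lt measurable_const (hZm _ _))
  have hbadP : ∀ ij, P.real (bad ij) ≤ ε / (N : ℝ) ^ 2 := by
    rintro ⟨i, j⟩
    by_cases h : i = j
    · have : bad (i, j) = ∅ := by ext ω; simp [bad, h]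
      rw [this]
      simp
      positivity
    · have := aux_tail P (Z i j) (hZm i j) (eLpNorm (ψ i j) 2 (cubeMeasure d)).toNNReal
        (NNReal.coe_pos.1 (hψpos 2 i j h (hFdist i j h))) (hZlaw i j h) κ hκ0
      rw [hexp] at this
      refine le_trans (measureReal_mono ?_) this
      exact fun ω hω => hω.2
  set Bad := ⋃ ij, bad ij with hBad
  have hBadm : MeasurableSet Bad := MeasurableSet.iUnion hbadm
  have hBadP : P.real Bad ≤ ε := by
    refine (measureReal_iUnion_fintype_le bad).trans ?_
    refine (Finset.sum_le_sum fun ij _ => hbadP ij).trans (le_of_eq ?_)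
    simp
    field_simp
  have hanti : ∀ᵐ ω ∂P, ∀ i j, i ≠ j → Z j i ω = - Z i j ω := by
    rw [ae_all_iff]; intro i
    rw [ae_all_iff]; intro j
    by_cases h : i = j
    · simp [h]
    · filter_upwards [hZanti i j h] with ω hω _ using hω
  have hae : ∀ᵐ ω ∂P, Lnorm p (fun t => F (ihat ω) t - f t) ≤
      B + Bad.indicator (fun _ => 2 * L) ω := by
    filter_upwards [hanti] with ω hω
    by_cases hb : ω ∈ Bad
    · rw [Set.indicator_of_mem hb]
      linarith [hcrude (ihat ω)]
    · rw [Set.indicator_of_notMem hb, add_zero]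
      apply hgood
      have hle : ∀ i j, i ≠ j → Z i j ω ≤ κ * Lnorm 2 (ψ i j) := by
        intro i j hij
        by_contra hlt
        exact hb (Set.mem_iUnion.2 ⟨(i, j), hij, not_le.1 hlt⟩)
      intro i j hij
      rw [abs_le']
      refine ⟨hle i j hij, ?_⟩
      rw [← hω i j hij, ← hψsymm i j hij]
      exact hle j i hij.symm
  have hint1 : Integrable (fun ω => Lnorm p (fun t => F (ihat ω) t - f t)) P := by
    refine Integrable.of_bound (C := 2 * L) ?_ ?_
    · have : Measurable (fun i : Fin N => Lnorm p (fun t => F i t - f t)) := measurable_of_finite _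
      exact (this.comp hihatm).aestronglyMeasurable
    · refine Filter.Eventually.of_forall fun ω => ?_
      rw [Real.norm_of_nonneg (aux_nonneg _ _)]
      exact hcrude _
  have hint3 : Integrable (Bad.indicator (fun _ => 2 * L)) P :=
    (integrable_const _).indicator hBadm
  have hmain := integral_mono_ae hint1 ((integrable_const B).add hint3) hae
  have hcalc : ∫ ω, (B + Bad.indicator (fun _ => 2 * L) ω) ∂P = B + P.real Bad * (2 * L) := by
    rw [integral_add (integrable_const B) hint3, integral_indicator_const _ hBadm]
    simp
  have hmain' : ∫ ω, Lnorm p (fun t => F (ihat ω) t - f t) ∂P ≤ B + P.real Bad * (2 * L) :=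
    hcalc ▸ hmain
  have : Nonempty (Fin N) := ⟨istar⟩
  have hinf : m ≤ ⨅ i, Lnorm p (fun t => F i t - f t) :=
    le_ciInf fun i => (histar i).trans (le_of_eq (aux_comm p f (F i)))
  have e1 := mul_le_mul_of_nonneg_left hinf (by positivity : 0 ≤ 2 * Q2 + 1)
  have e2 := mul_le_mul_of_nonneg_right hBadP (by positivity : 0 ≤ 2 * L)
  linarith
end

section
/- Let p = ∞ and suppose the probe set is Ψ̄(γ₀) as described in the context, with γ₀ = ε√(ln N) < L. Run the aggregation procedure with δ = ε and κ = √(2 ln(N²/ε)). Then E‖f̂ − f‖_∞ ≤ 3·min_{i∈I_N} ‖f_i − f‖_∞ + 3 Q₄(γ₀)·ε·√(2 ln(N²/ε)) + 2Lε, where Q₄(γ) := max_{i∈I_N, i≠i*} ‖S_{i*i}(·,γ)‖_2/‖S_{i*i}(·,γ)‖_1 and S_{i*i}(·,γ) := (|f_{i*}(·) − f_i(·)| − ‖f_{i*} − f_i‖_∞ + γ)_+ (positive part). -/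
open MeasureTheory
open scoped ENNReal

instance cube_prob (d : ℕ) : IsProbabilityMeasure (cubeMeasure d) := by
  constructor
  simp [cubeMeasure, Real.volume_Icc_pi]

lemma ae_abs_le {d : ℕ} {g : (Fin d → ℝ) → ℝ} (hg : eLpNorm g ⊤ (cubeMeasure d) ≠ ⊤) :
    ∀ᵐ t ∂(cubeMeasure d), |g t| ≤ Lnorm ⊤ g := by
  have h := ae_le_eLpNormEssSup (f := g) (μ := cubeMeasure d)
  filter_upwards [h] with t ht
  rw [← eLpNorm_exponent_top] at ht
  have := ENNReal.toReal_mono hg ht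
  simpa [Lnorm] using this

lemma Lnorm_nonneg {d : ℕ} {r : ℝ≥0∞} {g : (Fin d → ℝ) → ℝ} : 0 ≤ Lnorm r g :=
  ENNReal.toReal_nonneg

lemma sub_fin {d : ℕ} {g h : (Fin d → ℝ) → ℝ} (hgm : Measurable g) (hhm : Measurable h)
    (hg : eLpNorm g ⊤ (cubeMeasure d) ≠ ⊤)
    (hh : eLpNorm h ⊤ (cubeMeasure d) ≠ ⊤) :
    eLpNorm (fun t => g t - h t) ⊤ (cubeMeasure d) ≠ ⊤ := by
  have a : MemLp g ⊤ (cubeMeasure d) := ⟨hgm.aestronglyMeasurable, hg.lt_top⟩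
  have b : MemLp h ⊤ (cubeMeasure d) := ⟨hhm.aestronglyMeasurable, hh.lt_top⟩
  exact (a.sub b).2.ne

lemma Lnorm_sub_le {d : ℕ} {g h : (Fin d → ℝ) → ℝ} (hgm : Measurable g) (hhm : Measurable h)
    (hg : eLpNorm g ⊤ (cubeMeasure d) ≠ ⊤)
    (hh : eLpNorm h ⊤ (cubeMeasure d) ≠ ⊤) :
    Lnorm ⊤ (fun t => g t - h t) ≤ Lnorm ⊤ g + Lnorm ⊤ h := by
  unfold Lnorm
  rw [← ENNReal.toReal_add hg hh]
  apply ENNReal.toReal_mono (ENNReal.add_ne_top.2 ⟨hg, hh⟩)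
  exact eLpNorm_sub_le hgm.aestronglyMeasurable hhm.aestronglyMeasurable (by simp)

lemma Lnorm_symm {d : ℕ} (r : ℝ≥0∞) (g h : (Fin d → ℝ) → ℝ) :
    Lnorm r (fun t => g t - h t) = Lnorm r (fun t => h t - g t) := by
  unfold Lnorm
  rw [← eLpNorm_neg]
  congr 2
  ext t; simp

lemma Lnorm_one {d : ℕ} {g : (Fin d → ℝ) → ℝ} (hg : AEStronglyMeasurable g (cubeMeasure d)) :
    Lnorm 1 g = ∫ t, |g t| ∂(cubeMeasure d) := by
  unfold Lnorm
  rw [eLpNorm_one_eq_lintegral_enorm, ← integral_norm_eq_lintegral_enorm hg]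
  rfl

lemma abs_integral_mul_le {d : ℕ} {p h : (Fin d → ℝ) → ℝ} (hp : Integrable p (cubeMeasure d))
    (hhm : Measurable h) (hh : eLpNorm h ⊤ (cubeMeasure d) ≠ ⊤) :
    Integrable (fun t => p t * h t) (cubeMeasure d) ∧
    |∫ t, p t * h t ∂(cubeMeasure d)| ≤ Lnorm ⊤ h * Lnorm 1 p := by
  have hae := ae_abs_le hh
  have hi : Integrable (fun t => p t * h t) (cubeMeasure d) :=
    hp.mul_bdd (c := Lnorm ⊤ h) hhm.aestronglyMeasurable hae
  refine ⟨hi, ?_⟩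
  rw [Lnorm_one hp.1, ← integral_const_mul]
  refine (abs_integral_le_integral_abs).trans (integral_mono_ae hi.abs (hp.abs.const_mul _) ?_)
  filter_upwards [hae] with t ht
  simp only [abs_mul]
  rw [mul_comm]
  gcongr

lemma measurable_rsign : Measurable Real.sign := by
  unfold Real.sign
  exact Measurable.ite measurableSet_Iio measurable_const
    (Measurable.ite measurableSet_Ioi measurable_const measurable_const)

lemma abs_rsign_le (x : ℝ) : |Real.sign x| ≤ 1 := by
  rcases Real.sign_apply_eq x with h | h | h <;> simp [h]

lemma rsign_mul (x : ℝ) : Real.sign x * x = |x| := by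
  rcases lt_trichotomy x 0 with h | h | h
  · simp [Real.sign_of_neg h, abs_of_neg h]
  · simp [h]
  · simp [Real.sign_of_pos h, abs_of_pos h]

lemma probe {d : ℕ} {g S p : (Fin d → ℝ) → ℝ} {γ : ℝ} (hγ : 0 < γ) (hgm : Measurable g)
    (hg : eLpNorm g ⊤ (cubeMeasure d) ≠ ⊤) (hpos : 0 < Lnorm ⊤ g)
    (hS : ∀ t, S t = max (|g t| - Lnorm ⊤ g + γ) 0)
    (hp : ∀ t, p t = S t * Real.sign (g t) / ∫ u, S u ∂(cubeMeasure d)) :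
    Integrable p (cubeMeasure d) ∧ 0 < Lnorm 1 p ∧ Lnorm 1 p ≤ 1 ∧
    Lnorm 2 p ≤ Lnorm 2 S / Lnorm 1 S ∧ 1 ≤ Lnorm 2 S / Lnorm 1 S ∧
    Lnorm ⊤ g - γ ≤ ∫ t, p t * g t ∂(cubeMeasure d) ∧ 0 < Lnorm 2 p := by
  have hae := ae_abs_le hg
  set G := Lnorm ⊤ g with hG
  set μ := cubeMeasure d with hμ
  have hSm : Measurable S := by
    have : S = fun t => max (|g t| - G + γ) 0 := funext hS
    rw [this]; fun_prop
  have hS0 : ∀ t, 0 ≤ S t := fun t => by rw [hS]; exact le_max_right _ _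
  have hSb : ∀ᵐ t ∂μ, ‖S t‖ ≤ γ := by
    filter_upwards [hae] with t ht
    rw [Real.norm_of_nonneg (hS0 t), hS]
    exact max_le (by linarith) hγ.le
  have hSL : ∀ q, MemLp S q μ := fun q => MemLp.of_bound hSm.aestronglyMeasurable γ hSb
  have hSi : Integrable S μ := memLp_one_iff_integrable.1 (hSL 1)
  have hSg : ¬ (∀ᵐ t ∂μ, S t * |g t| = 0) := by
    intro h
    have hlt : max (G - γ) 0 < G := max_lt (by linarith) hpos
    have hb : ∀ᵐ t ∂μ, ‖g t‖ ≤ max (G - γ) 0 := by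
      filter_upwards [h] with t ht
      rcases mul_eq_zero.1 ht with h0 | h0
      · rw [hS] at h0
        have := le_max_left (|g t| - G + γ) 0
        apply le_max_of_le_left
        rw [Real.norm_eq_abs]; linarith
      · rw [Real.norm_eq_abs, h0]; exact le_max_right _ _
    have h1 : eLpNorm g ⊤ μ ≤ ENNReal.ofReal (max (G - γ) 0) := by
      rw [eLpNorm_exponent_top]; exact eLpNormEssSup_le_of_ae_bound hb
    have h2 : G ≤ max (G - γ) 0 := ENNReal.toReal_le_of_le_ofReal (le_max_right _ _) h1
    linarith
  have hI : 0 < ∫ u, S u ∂μ := by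
    refine lt_of_le_of_ne (integral_nonneg hS0) fun h => hSg ?_
    have := (integral_eq_zero_iff_of_nonneg hS0 hSi).1 h.symm
    filter_upwards [this] with t ht
    simp [ht]
  set I := ∫ u, S u ∂μ with hIdef
  have hpm : Measurable p := by
    have : p = fun t => S t * Real.sign (g t) / I := funext hp
    rw [this]
    exact (hSm.mul (measurable_rsign.comp hgm)).div_const _
  have hpS : ∀ t, ‖p t‖ ≤ ‖(I⁻¹ • S) t‖ := by
    intro t
    rw [hp, div_eq_mul_inv]
    simp only [Pi.smul_apply, smul_eq_mul, norm_mul]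
    have := abs_rsign_le (g t)
    rw [← Real.norm_eq_abs] at this
    calc _ ≤ ‖S t‖ * 1 * ‖I⁻¹‖ := by gcongr
      _ = _ := by ring
  have hpL : ∀ q, MemLp p q μ := fun q =>
    ((hSL q).const_smul I⁻¹).mono hpm.aestronglyMeasurable (ae_of_all _ hpS)
  have hpi : Integrable p μ := memLp_one_iff_integrable.1 (hpL 1)
  have hS1 : Lnorm 1 S = I := by
    rw [Lnorm_one hSm.aestronglyMeasurable]
    exact integral_congr_ae (ae_of_all _ fun t => abs_of_nonneg (hS0 t))
  have hpq : ∀ q, Lnorm q p ≤ Lnorm q S / I := by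
    intro q
    have h1 : eLpNorm p q μ ≤ eLpNorm (I⁻¹ • S) q μ := eLpNorm_mono hpS
    have h2 := ENNReal.toReal_mono ((hSL q).const_smul I⁻¹).2.ne h1
    rw [eLpNorm_const_smul, ENNReal.toReal_mul] at h2
    simp only [toReal_enorm, Real.norm_of_nonneg (inv_pos.2 hI).le] at h2
    rw [div_eq_inv_mul]; exact h2
  have hpne : ¬ (p =ᵐ[μ] 0) := by
    intro h
    apply hSg
    filter_upwards [h] with t ht
    rw [hp] at ht
    simp only [Pi.zero_apply, div_eq_zero_iff, mul_eq_zero, Real.sign_eq_zero_iff] at ht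
    rcases ht with (h | h) | h
    · simp [h]
    · simp [h]
    · exact absurd h hI.ne'
  have hppos : ∀ q, q ≠ 0 → 0 < Lnorm q p := by
    intro q hq
    refine ENNReal.toReal_pos ?_ (hpL q).2.ne
    rw [Ne, eLpNorm_eq_zero_iff hpm.aestronglyMeasurable hq]
    exact hpne
  refine ⟨hpi, hppos 1 (by simp), ?_, ?_, ?_, ?_, hppos 2 (by simp)⟩
  · have := hpq 1
    rwa [hS1, div_self hI.ne'] at this
  · rw [hS1]; exact hpq 2
  · rw [hS1, le_div_iff₀ hI, one_mul, ← hS1]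
    exact ENNReal.toReal_mono (hSL 2).2.ne
      (eLpNorm_le_eLpNorm_of_exponent_le (by norm_num) hSm.aestronglyMeasurable)
  · have hi := (abs_integral_mul_le hpi hgm hg).1
    have : G - γ = ∫ t, (G - γ) * (S t / I) ∂μ := by
      rw [integral_const_mul, integral_div, ← hIdef, div_self hI.ne', mul_one]
    rw [this]
    refine integral_mono ((hSi.div_const _).const_mul _) hi fun t => ?_
    simp only
    have e : p t * g t = S t * |g t| / I := by
      rw [hp, ← rsign_mul]; ring
    rw [e, mul_div_assoc', mul_comm (G - γ)]
    gcongr ?_ / I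
    rcases eq_or_lt_of_le (hS0 t) with h | h
    · rw [← h]; simp
    · have h' := h
      rw [hS, lt_max_iff] at h'
      have : G - γ ≤ |g t| := by
        rcases h' with h' | h' <;> linarith
      exact mul_le_mul_of_nonneg_left this h.le

lemma gauss_tail {Ω : Type} [MeasurableSpace Ω] (P : Measure Ω) [IsProbabilityMeasure P]
    (X : Ω → ℝ) (hX : Measurable X) (v : NNReal)
    (hlaw : Measure.map X P = ProbabilityTheory.gaussianReal 0 v) (t : ℝ) (ht : 0 ≤ t) :
    P.real {ω | t ≤ X ω} ≤ Real.exp (-t ^ 2 / (2 * v)) := by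
  apply ProbabilityTheory.HasSubgaussianMGF.measure_ge_le _ ht
  constructor
  · intro s
    have := ProbabilityTheory.integrable_exp_mul_gaussianReal (μ := 0) (v := v) s
    rw [← hlaw] at this
    exact this.comp_measurable hX
  · intro s
    rw [ProbabilityTheory.mgf_gaussianReal hlaw]
    simp

/-- Corollary 3 of the paper: `L^∞` oracle inequality for the
aggregation procedure with the `(γ₀,∞)`-good probe set `Ψ̄(γ₀)`,
`γ₀ = ε√(ln N) < L`, `δ = ε` and `κ = √(2 ln(N²/ε))`. -/
theorem stmt_5
    {d N : ℕ} (hd : 1 ≤ d) (hN : 2 ≤ N)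
    (f : (Fin d → ℝ) → ℝ) (F : Fin N → (Fin d → ℝ) → ℝ)
    (hfm : Measurable f) (hFm : ∀ i, Measurable (F i))
    (hf : eLpNorm f ⊤ (cubeMeasure d) ≠ ⊤)
    (hF : ∀ i, eLpNorm (F i) ⊤ (cubeMeasure d) ≠ ⊤)
    (hFdist : ∀ i j, i ≠ j → 0 < Lnorm ⊤ (fun t => F i t - F j t))
    (L : ℝ) (hL : L = max (Lnorm ⊤ f) (⨆ i, Lnorm ⊤ (F i)))
    (ε : ℝ) (hε0 : 0 < ε) (hε1 : ε < 1)
    (γ0 : ℝ) (hγ0 : γ0 = ε * Real.sqrt (Real.log N)) (hγ0L : γ0 < L)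
    -- the probe functions of `Ψ̄(γ₀)`
    (ψ : Fin N → Fin N → (Fin d → ℝ) → ℝ)
    (hψdef : ∀ i j, i ≠ j → ∀ t, ψ i j t =
      max (|F i t - F j t| - Lnorm ⊤ (fun u => F i u - F j u) + γ0) 0 *
        Real.sign (F i t - F j t) /
        ∫ u, max (|F i u - F j u| - Lnorm ⊤ (fun v => F i v - F j v) + γ0) 0
          ∂(cubeMeasure d))
    {Ω : Type} [MeasurableSpace Ω] (P : Measure Ω) [IsProbabilityMeasure P]
    (Z : Fin N → Fin N → Ω → ℝ) (hZm : ∀ i j, Measurable (Z i j))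
    (hZlaw : ∀ i j, i ≠ j → Measure.map (Z i j) P =
      ProbabilityTheory.gaussianReal 0 ((eLpNorm (ψ i j) 2 (cubeMeasure d)).toNNReal ^ 2))
    (hZanti : ∀ i j, i ≠ j → ∀ᵐ ω ∂P, Z j i ω = - Z i j ω)
    (κ : ℝ) (hκ : κ = Real.sqrt (2 * Real.log ((N : ℝ) ^ 2 / ε)))
    (Mhat : Fin N → Ω → ℝ)
    (hM : ∀ i ω, Mhat i ω =
      ⨆ jl : {jl : Fin N × Fin N // jl.1 ≠ jl.2},
        (|(∫ t, ψ jl.1.1 jl.1.2 t * (f t - F i t) ∂(cubeMeasure d)) +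
            ε * Z jl.1.1 jl.1.2 ω| - ε * κ * Lnorm 2 (ψ jl.1.1 jl.1.2)) /
          Lnorm 1 (ψ jl.1.1 jl.1.2))
    (ihat : Ω → Fin N) (hihatm : Measurable ihat)
    (hmin : ∀ ω i, Mhat (ihat ω) ω ≤ Mhat i ω)
    (istar : Fin N)
    (histar : ∀ i, Lnorm ⊤ (fun t => f t - F istar t) ≤ Lnorm ⊤ (fun t => f t - F i t)) :
    ∫ ω, Lnorm ⊤ (fun t => F (ihat ω) t - f t) ∂P ≤
      3 * (⨅ i, Lnorm ⊤ (fun t => F i t - f t))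
        + 3 * (⨆ j : {j : Fin N // j ≠ istar},
            Lnorm 2 (fun t =>
              max (|F istar t - F j.1 t| - Lnorm ⊤ (fun u => F istar u - F j.1 u) + γ0) 0) /
            Lnorm 1 (fun t =>
              max (|F istar t - F j.1 t| - Lnorm ⊤ (fun u => F istar u - F j.1 u) + γ0) 0)) *
            ε * Real.sqrt (2 * Real.log ((N : ℝ) ^ 2 / ε))
        + 2 * L * ε := by
  have hNR : (2 : ℝ) ≤ N := by exact_mod_cast hN
  have hlogN : 0 < Real.log N := Real.log_pos (by linarith)
  have hγpos : 0 < γ0 := by rw [hγ0]; exact mul_pos hε0 (Real.sqrt_pos.2 hlogN)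
  have hNe : (N : ℝ) ≤ (N : ℝ) ^ 2 / ε := by
    rw [le_div_iff₀ hε0]; nlinarith
  have hlog2 : Real.log N ≤ Real.log ((N : ℝ) ^ 2 / ε) := Real.log_le_log (by linarith) hNe
  have hκ0 : 0 ≤ κ := by rw [hκ]; exact Real.sqrt_nonneg _
  have hκsq : κ ^ 2 = 2 * Real.log ((N : ℝ) ^ 2 / ε) := by
    rw [hκ, Real.sq_sqrt (by linarith)]
  have hγκ : γ0 ≤ ε * κ := by
    rw [hγ0, hκ]; gcongr; linarith
  rw [← hκ]
  set r := Lnorm ⊤ (fun t => f t - F istar t) with hr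
  have hr0 : 0 ≤ r := Lnorm_nonneg
  haveI : Nonempty (Fin N) := ⟨istar⟩
  have hinf : (⨅ i, Lnorm ⊤ (fun t => F i t - f t)) = r := by
    apply le_antisymm
    · rw [hr, Lnorm_symm]
      exact ciInf_le (Set.finite_range _).bddBelow istar
    · refine le_ciInf fun i => ?_
      rw [Lnorm_symm]; exact histar i
  rw [hinf]
  set Q := (⨆ j : {j : Fin N // j ≠ istar},
            Lnorm 2 (fun t =>
              max (|F istar t - F j.1 t| - Lnorm ⊤ (fun u => F istar u - F j.1 u) + γ0) 0) /
            Lnorm 1 (fun t =>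
              max (|F istar t - F j.1 t| - Lnorm ⊤ (fun u => F istar u - F j.1 u) + γ0) 0)) with hQ
  have hQle : ∀ j, j ≠ istar → Lnorm 2 (fun t =>
              max (|F istar t - F j t| - Lnorm ⊤ (fun u => F istar u - F j u) + γ0) 0) /
            Lnorm 1 (fun t =>
              max (|F istar t - F j t| - Lnorm ⊤ (fun u => F istar u - F j u) + γ0) 0) ≤ Q := by
    intro j hj
    exact le_ciSup (f := fun j : {j : Fin N // j ≠ istar} => Lnorm 2 (fun t =>
              max (|F istar t - F j.1 t| - Lnorm ⊤ (fun u => F istar u - F j.1 u) + γ0) 0) /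
            Lnorm 1 (fun t =>
              max (|F istar t - F j.1 t| - Lnorm ⊤ (fun u => F istar u - F j.1 u) + γ0) 0))
      (Set.finite_range _).bddAbove ⟨j, hj⟩
  have hQ0 : 0 ≤ Q := Real.iSup_nonneg fun j => div_nonneg Lnorm_nonneg Lnorm_nonneg
  have hpr := fun i j (hij : i ≠ j) => probe (g := fun t => F i t - F j t)
    (S := fun t => max (|F i t - F j t| - Lnorm ⊤ (fun u => F i u - F j u) + γ0) 0)
    (p := ψ i j) hγpos ((hFm i).sub (hFm j)) (sub_fin (hFm i) (hFm j) (hF i) (hF j))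
    (hFdist i j hij) (fun t => rfl) (hψdef i j hij)
  have hψanti : ∀ i j, i ≠ j → ψ j i = - ψ i j := by
    intro i j hij
    ext t
    rw [Pi.neg_apply, hψdef i j hij, hψdef j i hij.symm, Lnorm_symm ⊤ (F j) (F i)]
    have e1 : ∀ t, |F j t - F i t| = |F i t - F j t| := fun t => abs_sub_comm _ _
    have e2 : Real.sign (F j t - F i t) = - Real.sign (F i t - F j t) := by
      rw [← Real.sign_neg]; congr 1; ring
    simp only [e1, e2]
    ring
  have hσanti : ∀ i j, i ≠ j → Lnorm 2 (ψ j i) = Lnorm 2 (ψ i j) := by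
    intro i j hij
    rw [hψanti i j hij]; unfold Lnorm; rw [eLpNorm_neg]
  -- the bad event
  let pairs : Finset (Fin N × Fin N) := Finset.univ.filter fun q => q.1 ≠ q.2
  let bad : Set Ω := ⋃ q ∈ pairs, {ω | κ * Lnorm 2 (ψ q.1 q.2) ≤ Z q.1 q.2 ω}
  have hbadm : MeasurableSet bad :=
    Finset.measurableSet_biUnion _ fun q _ => measurableSet_le measurable_const (hZm _ _)
  have hbad : P.real bad ≤ ε := by
    have h1 : P.real bad ≤ ∑ q ∈ pairs, P.real {ω | κ * Lnorm 2 (ψ q.1 q.2) ≤ Z q.1 q.2 ω} :=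
      measureReal_biUnion_finset_le _ _
    have h2 : ∀ q ∈ pairs, P.real {ω | κ * Lnorm 2 (ψ q.1 q.2) ≤ Z q.1 q.2 ω}
        ≤ ε / (N : ℝ) ^ 2 := by
      intro q hq
      have hq' : q.1 ≠ q.2 := (Finset.mem_filter.1 hq).2
      have hpos := (hpr _ _ hq').2.2.2.2.2.2
      refine (gauss_tail P _ (hZm _ _) _ (hZlaw _ _ hq') _
        (mul_nonneg hκ0 Lnorm_nonneg)).trans (le_of_eq ?_)
      have e : (((eLpNorm (ψ q.1 q.2) 2 (cubeMeasure d)).toNNReal ^ 2 : NNReal) : ℝ)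
        = Lnorm 2 (ψ q.1 q.2) ^ 2 := by push_cast; rfl
      rw [e, mul_pow, hκsq]
      have e2 : -(2 * Real.log ((N : ℝ) ^ 2 / ε) * Lnorm 2 (ψ q.1 q.2) ^ 2) /
          (2 * Lnorm 2 (ψ q.1 q.2) ^ 2) = - Real.log ((N : ℝ) ^ 2 / ε) := by
        field_simp
      rw [e2, Real.exp_neg, Real.exp_log (by linarith), inv_div]
    have h3 := h1.trans (Finset.sum_le_sum h2)
    rw [Finset.sum_const, nsmul_eq_mul] at h3
    have h4 : (pairs.card : ℝ) ≤ (N : ℝ) ^ 2 := by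
      have : pairs.card ≤ N ^ 2 := by
        refine (Finset.card_le_univ _).trans (by simp [sq])
      exact_mod_cast this
    refine h3.trans ?_
    calc _ ≤ (N : ℝ) ^ 2 * (ε / (N : ℝ) ^ 2) := by gcongr
      _ = ε := by field_simp
  have hLb : ∀ i, Lnorm ⊤ (fun t => F i t - f t) ≤ 2 * L := by
    intro i
    have h1 := Lnorm_sub_le (hFm i) hfm (hF i) hf
    have h2 : Lnorm ⊤ f ≤ L := by rw [hL]; exact le_max_left _ _
    have h3 : Lnorm ⊤ (F i) ≤ L := by
      rw [hL]
      exact le_max_of_le_right (le_ciSup (f := fun i => Lnorm ⊤ (F i))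
        (Set.finite_range _).bddAbove i)
    linarith
  have hL0 : 0 ≤ L := (hγpos.trans hγ0L).le
  set B := 3 * r + 3 * Q * ε * κ with hB
  have hB0 : 0 ≤ B := by positivity
  have hanti : ∀ᵐ ω ∂P, ∀ i j, i ≠ j → Z j i ω = - Z i j ω := by
    rw [ae_all_iff]; intro i
    rw [ae_all_iff]; intro j
    by_cases h : i = j
    · exact ae_of_all _ fun ω h' => absurd h h'
    · filter_upwards [hZanti i j h] with ω hω _ using hω
  have hgood : ∀ᵐ ω ∂P, ω ∉ bad → Lnorm ⊤ (fun t => F (ihat ω) t - f t) ≤ B := by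
    filter_upwards [hanti] with ω hω hnb
    have hlt : ∀ i j, i ≠ j → Z i j ω ≤ κ * Lnorm 2 (ψ i j) := by
      intro i j hij
      by_contra hcon
      apply hnb
      simp only [bad, Set.mem_iUnion]
      exact ⟨(i, j), by simp [pairs, hij], (not_le.1 hcon).le⟩
    have hZ : ∀ i j, i ≠ j → |Z i j ω| ≤ κ * Lnorm 2 (ψ i j) := by
      intro i j hij
      refine abs_le'.2 ⟨hlt i j hij, ?_⟩
      rw [← hω i j hij, ← hσanti i j hij]
      exact hlt j i hij.symm
    have hεZ : ∀ i j, i ≠ j → |ε * Z i j ω| ≤ ε * κ * Lnorm 2 (ψ i j) := by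
      intro i j hij
      rw [abs_mul, abs_of_pos hε0, mul_assoc]
      exact mul_le_mul_of_nonneg_left (hZ i j hij) hε0.le
    have hfsm : ∀ i, Measurable (fun t => f t - F i t) := fun i => hfm.sub (hFm i)
    have hfsf : ∀ i, eLpNorm (fun t => f t - F i t) ⊤ (cubeMeasure d) ≠ ⊤ :=
      fun i => sub_fin hfm (hFm i) hf (hF i)
    have hstar : ∀ i j, i ≠ j → |(∫ t, ψ i j t * (f t - F istar t) ∂(cubeMeasure d)) +
            ε * Z i j ω| ≤ r * Lnorm 1 (ψ i j) + ε * κ * Lnorm 2 (ψ i j) := by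
      intro i j hij
      refine (abs_add_le _ _).trans (add_le_add ?_ (hεZ i j hij))
      exact (abs_integral_mul_le (hpr i j hij).1 (hfsm istar) (hfsf istar)).2
    have hMstar : Mhat istar ω ≤ r := by
      rw [hM]
      refine Real.iSup_le (fun q => ?_) hr0
      rw [div_le_iff₀ (hpr _ _ q.2).2.1]
      have := hstar _ _ q.2
      linarith
    have hMhat : ∀ i j, i ≠ j → |(∫ t, ψ i j t * (f t - F (ihat ω) t) ∂(cubeMeasure d)) +
            ε * Z i j ω| ≤ r * Lnorm 1 (ψ i j) + ε * κ * Lnorm 2 (ψ i j) := by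
      intro i j hij
      have h1 := (hmin ω istar).trans hMstar
      rw [hM] at h1
      have h2 := (le_ciSup (f := fun jl : {jl : Fin N × Fin N // jl.1 ≠ jl.2} =>
        (|(∫ t, ψ jl.1.1 jl.1.2 t * (f t - F (ihat ω) t) ∂(cubeMeasure d)) +
            ε * Z jl.1.1 jl.1.2 ω| - ε * κ * Lnorm 2 (ψ jl.1.1 jl.1.2)) /
          Lnorm 1 (ψ jl.1.1 jl.1.2)) (Set.finite_range _).bddAbove ⟨(i, j), hij⟩).trans h1
      rw [div_le_iff₀ (hpr _ _ hij).2.1] at h2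
      simp only at h2
      linarith
    by_cases hi : ihat ω = istar
    · rw [hi, Lnorm_symm, ← hr, hB]
      have : 0 ≤ 3 * Q * ε * κ := by positivity
      linarith
    · have hne : istar ≠ ihat ω := fun h => hi h.symm
      generalize ihat ω = k at *
      obtain ⟨p1, p2, p3, p4, p5, p6, p7⟩ := hpr istar k hne
      have a1 := hstar istar k hne
      have a2 := hMhat istar k hne
      have i1 := (abs_integral_mul_le p1 (hfsm istar) (hfsf istar)).1
      have i2 := (abs_integral_mul_le p1 (hfsm k) (hfsf k)).1
      have e : ∫ t, ψ istar k t * (F istar t - F k t) ∂(cubeMeasure d) =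
        ((∫ t, ψ istar k t * (f t - F k t) ∂(cubeMeasure d)) + ε * Z istar k ω) -
        ((∫ t, ψ istar k t * (f t - F istar t) ∂(cubeMeasure d)) + ε * Z istar k ω) := by
        rw [add_sub_add_right_eq_sub, ← integral_sub i2 i1]
        congr 1; ext t; ring
      rw [e] at p6
      have b1 := (le_abs_self _).trans a2
      have b2 := (neg_abs_le _).trans' (neg_le_neg a1)
      have q1 := hQle k hi
      have hQ1 : 1 ≤ Q := p5.trans q1
      have hσ : ε * κ * Lnorm 2 (ψ istar k) ≤ ε * κ * Q := by
        gcongr; exact p4.trans q1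
      have hr1 : r * Lnorm 1 (ψ istar k) ≤ r := mul_le_of_le_one_right hr0 p3
      have hγQ : γ0 ≤ ε * κ * Q :=
        hγκ.trans (le_mul_of_one_le_right (by positivity) hQ1)
      have htri : Lnorm ⊤ (fun t => F k t - f t) ≤
          r + Lnorm ⊤ (fun t => F istar t - F k t) := by
        have h := Lnorm_sub_le (hfsm istar |>.neg) ((hFm istar).sub (hFm k))
          (by rw [eLpNorm_neg]; exact hfsf istar)
          (sub_fin (hFm istar) (hFm k) (hF istar) (hF k))
        have e1 : (fun t => (-fun t => f t - F istar t) t - (F istar - F k) t)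
            = fun t => F k t - f t := by
          ext t; simp only [Pi.neg_apply, Pi.sub_apply]; ring
        have e2 : Lnorm ⊤ (-fun t => f t - F istar t) = r := by
          rw [hr]; unfold Lnorm; rw [eLpNorm_neg]
        rw [e1, e2] at h
        exact h
      rw [hB]
      linarith
  have hXm : Measurable fun ω => Lnorm ⊤ (fun t => F (ihat ω) t - f t) :=
    (measurable_of_finite (fun i : Fin N => Lnorm ⊤ (fun t => F i t - f t))).comp hihatm
  have hXi : Integrable (fun ω => Lnorm ⊤ (fun t => F (ihat ω) t - f t)) P :=
    Integrable.of_bound hXm.aestronglyMeasurable (2 * L) (ae_of_all _ fun ω => by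
      rw [Real.norm_of_nonneg Lnorm_nonneg]; exact hLb _)
  have hindi : Integrable (bad.indicator fun _ => 2 * L) P :=
    (integrable_const _).indicator hbadm
  calc ∫ ω, Lnorm ⊤ (fun t => F (ihat ω) t - f t) ∂P
      ≤ ∫ ω, (B + bad.indicator (fun _ => 2 * L) ω) ∂P := by
        refine integral_mono_ae hXi ((integrable_const _).add hindi) ?_
        filter_upwards [hgood] with ω hω
        by_cases h : ω ∈ bad
        · rw [Set.indicator_of_mem h]
          have := hLb (ihat ω)
          linarith
        · rw [Set.indicator_of_notMem h, add_zero]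
          exact hω h
    _ = B + P.real bad * (2 * L) := by
        rw [integral_add (integrable_const _) hindi, integral_indicator_const _ hbadm]
        simp
    _ ≤ B + 2 * L * ε := by nlinarith
end

section
/- Consider the modified aggregation procedure of the context, which selects f̃ = f_ĩ with ĩ minimizing M̃_i := max_{ψ∈Ψ} |Δ_i(ψ)|/‖ψ‖_q (no subtraction of the noise term, so no knowledge of ε is needed). If Ψ is (γ,p)-good with respect to G, then E‖f̃ − f‖_p ≤ (2·max_{ψ∈Ψ*} ‖ψ‖_q + 1)·min_{i∈I_N} ‖f − f_i‖_p + 2κε·(max_{ψ∈Ψ*} ‖ψ‖_q)·(max_{ψ∈Ψ} ‖ψ‖_2/‖ψ‖_q) + γ + (‖f‖_p + max_{i∈I_N} ‖f_i‖_p)·δ. -/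
open MeasureTheory
open scoped ENNReal

theorem Lnorm_nonneg_aux {d : ℕ} (r : ℝ≥0∞) (g : (Fin d → ℝ) → ℝ) : 0 ≤ Lnorm r g :=
  ENNReal.toReal_nonneg

theorem Lnorm_holder_aux {d : ℕ} {p q : ℝ≥0∞} (hpq : 1 / p + 1 / q = 1)
    {u g : (Fin d → ℝ) → ℝ} (hu : MemLp u q (cubeMeasure d)) (hg : MemLp g p (cubeMeasure d)) :
    Integrable (fun t => u t * g t) (cubeMeasure d) ∧
      |∫ t, u t * g t ∂(cubeMeasure d)| ≤ Lnorm q u * Lnorm p g := by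
  haveI : ENNReal.HolderTriple q p 1 := ⟨by
    rw [add_comm]; simpa [one_div] using hpq⟩
  have h1 : Integrable (fun t => u t * g t) (cubeMeasure d) := by
    have := hg.mul' hu (r := 1)
    exact memLp_one_iff_integrable.1 this
  refine ⟨h1, ?_⟩
  have h2 : eLpNorm (fun t => u t * g t) 1 (cubeMeasure d)
      ≤ eLpNorm u q (cubeMeasure d) * eLpNorm g p (cubeMeasure d) := by
    have := eLpNorm_smul_le_mul_eLpNorm (p := q) (q := p) (r := 1) hg.1 hu.1
    exact this
  have h3 : ‖∫ t, u t * g t ∂(cubeMeasure d)‖ ≤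
      (eLpNorm (fun t => u t * g t) 1 (cubeMeasure d)).toReal := by
    refine (norm_integral_le_integral_norm _).trans ?_
    rw [integral_norm_eq_lintegral_enorm h1.1, eLpNorm_one_eq_lintegral_enorm]
  rw [Real.norm_eq_abs] at h3
  refine h3.trans ?_
  rw [Lnorm, Lnorm, ← ENNReal.toReal_mul]
  exact ENNReal.toReal_mono (ENNReal.mul_ne_top hu.2.ne hg.2.ne) h2

theorem Lnorm_sub_aux {d : ℕ} {p : ℝ≥0∞} (hp : 1 ≤ p) {u g : (Fin d → ℝ) → ℝ}
    (hu : MemLp u p (cubeMeasure d)) (hg : MemLp g p (cubeMeasure d)) :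
    Lnorm p (fun t => u t - g t) ≤ Lnorm p u + Lnorm p g := by
  rw [Lnorm, Lnorm, Lnorm, ← ENNReal.toReal_add hu.2.ne hg.2.ne]
  exact ENNReal.toReal_mono (ENNReal.add_ne_top.2 ⟨hu.2.ne, hg.2.ne⟩)
    (eLpNorm_sub_le hu.1 hg.1 hp)

theorem Lnorm_comm_aux {d : ℕ} (p : ℝ≥0∞) (u g : (Fin d → ℝ) → ℝ) :
    Lnorm p (fun t => u t - g t) = Lnorm p (fun t => g t - u t) := by
  have := eLpNorm_sub_comm u g p (cubeMeasure d)
  exact congrArg ENNReal.toReal this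

theorem Lnorm_two_pos_aux {d : ℕ} {q : ℝ≥0∞} {u : (Fin d → ℝ) → ℝ} (hm : Measurable u)
    (h2 : eLpNorm u 2 (cubeMeasure d) ≠ ⊤) (hq : 0 < Lnorm q u) : 0 < Lnorm 2 u := by
  refine ENNReal.toReal_pos (fun h0 => ?_) h2
  rw [eLpNorm_eq_zero_iff hm.aestronglyMeasurable (by norm_num)] at h0
  rw [Lnorm, eLpNorm_congr_ae h0] at hq
  simp at hq

/-- Theorem 3 of the paper: oracle inequality for the modified
aggregation procedure, which does not subtract the noise term. -/
theorem stmt_8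
    {d N : ℕ} (hd : 1 ≤ d) (hN : 2 ≤ N)
    (p q : ℝ≥0∞) (hp : 1 ≤ p) (hpq : 1 / p + 1 / q = 1)
    (γ : ℝ) (hγ : 0 ≤ γ)
    (f : (Fin d → ℝ) → ℝ) (F : Fin N → (Fin d → ℝ) → ℝ)
    (hfm : Measurable f) (hFm : ∀ i, Measurable (F i))
    (hf : eLpNorm f p (cubeMeasure d) ≠ ⊤)
    (hF : ∀ i, eLpNorm (F i) p (cubeMeasure d) ≠ ⊤)
    (hFdist : ∀ i j, i ≠ j → F i ≠ F j)
    {K : Type} [Fintype K] [Nonempty K]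
    (ψ : K → (Fin d → ℝ) → ℝ) (hψm : ∀ k, Measurable (ψ k))
    (hψq : ∀ k, eLpNorm (ψ k) q (cubeMeasure d) ≠ ⊤)
    (hψ2 : ∀ k, eLpNorm (ψ k) 2 (cubeMeasure d) ≠ ⊤)
    (hψpos : ∀ k, 0 < Lnorm q (ψ k))
    (rep : Fin N → Fin N → K)
    (hgood : ∀ i j, i ≠ j →
      |(∫ t, ψ (rep i j) t * (F i t - F j t) ∂(cubeMeasure d)) -
        Lnorm p (fun t => F i t - F j t)| ≤ γ)
    {Ω : Type} [MeasurableSpace Ω] (P : Measure Ω) [IsProbabilityMeasure P]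
    (ε δ : ℝ) (hε : 0 < ε) (hδ0 : 0 < δ) (hδ1 : δ < 1)
    (Z : K → Ω → ℝ) (hZm : ∀ k, Measurable (Z k))
    (κ : ℝ) (hκpos : 0 < κ)
    (hκ : (P {ω | κ ≤ ⨆ k, |Z k ω| / Lnorm 2 (ψ k)}).toReal ≤ δ)
    (Δ : Fin N → K → Ω → ℝ)
    (hΔ : ∀ i k ω, Δ i k ω =
      (∫ t, ψ k t * (f t - F i t) ∂(cubeMeasure d)) + ε * Z k ω)
    (Mtil : Fin N → Ω → ℝ)
    (hM : ∀ i ω, Mtil i ω = ⨆ k, |Δ i k ω| / Lnorm q (ψ k))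
    (itil : Ω → Fin N) (hitilm : Measurable itil)
    (hmin : ∀ ω i, Mtil (itil ω) ω ≤ Mtil i ω)
    (istar : Fin N)
    (histar : ∀ i, Lnorm p (fun t => f t - F istar t) ≤ Lnorm p (fun t => f t - F i t)) :
    ∫ ω, Lnorm p (fun t => F (itil ω) t - f t) ∂P ≤
      (2 * (⨆ j : {j : Fin N // j ≠ istar}, Lnorm q (ψ (rep istar j.1))) + 1) *
          (⨅ i, Lnorm p (fun t => f t - F i t))
        + 2 * κ * ε * (⨆ j : {j : Fin N // j ≠ istar}, Lnorm q (ψ (rep istar j.1))) *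
            (⨆ k, Lnorm 2 (ψ k) / Lnorm q (ψ k))
        + γ + (Lnorm p f + ⨆ i, Lnorm p (F i)) * δ := by
  have mf : MemLp f p (cubeMeasure d) := ⟨hfm.aestronglyMeasurable, hf.lt_top⟩
  have mF : ∀ i, MemLp (F i) p (cubeMeasure d) :=
    fun i => ⟨(hFm i).aestronglyMeasurable, (hF i).lt_top⟩
  have mψ : ∀ k, MemLp (ψ k) q (cubeMeasure d) :=
    fun k => ⟨(hψm k).aestronglyMeasurable, (hψq k).lt_top⟩
  have mfF : ∀ i, MemLp (fun t => f t - F i t) p (cubeMeasure d) := fun i => mf.sub (mF i)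
  have h2pos : ∀ k, 0 < Lnorm 2 (ψ k) :=
    fun k => Lnorm_two_pos_aux (hψm k) (hψ2 k) (hψpos k)
  haveI : Nonempty (Fin N) := ⟨istar⟩
  have hinf : (⨅ i, Lnorm p (fun t => f t - F i t)) = Lnorm p (fun t => f t - F istar t) :=
    le_antisymm (ciInf_le (Set.finite_range _).bddBelow istar) (le_ciInf histar)
  rw [hinf]
  set S := ⨆ j : {j : Fin N // j ≠ istar}, Lnorm q (ψ (rep istar j.1)) with hS
  set R := ⨆ k, Lnorm 2 (ψ k) / Lnorm q (ψ k) with hR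
  set C := Lnorm p f + ⨆ i, Lnorm p (F i) with hC
  set m := Lnorm p (fun t => f t - F istar t) with hm
  have hS0 : 0 ≤ S := Real.iSup_nonneg fun j => Lnorm_nonneg_aux _ _
  have hR0 : 0 ≤ R := Real.iSup_nonneg fun k =>
    div_nonneg (Lnorm_nonneg_aux _ _) (Lnorm_nonneg_aux _ _)
  have hm0 : 0 ≤ m := Lnorm_nonneg_aux _ _
  have hC0 : 0 ≤ C := add_nonneg (Lnorm_nonneg_aux _ _)
    (Real.iSup_nonneg fun k => Lnorm_nonneg_aux _ _)
  set B := (2 * S + 1) * m + 2 * κ * ε * S * R + γ with hB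
  have hB0 : 0 ≤ B := by positivity
  set A : Set Ω := {ω | κ ≤ ⨆ k, |Z k ω| / Lnorm 2 (ψ k)} with hA
  have hAm : MeasurableSet A := by
    refine measurableSet_le measurable_const ?_
    refine Measurable.iSup fun k => ?_
    exact ((continuous_abs.measurable).comp (hZm k)).div_const _
  have hbad : ∀ i, Lnorm p (fun t => F i t - f t) ≤ C := by
    intro i
    have h1 := Lnorm_sub_aux hp (mF i) mf
    have h2 : Lnorm p (F i) ≤ ⨆ i, Lnorm p (F i) :=
      le_ciSup (f := fun i => Lnorm p (F i)) (Set.finite_range _).bddAbove i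
    rw [hC]; linarith
  have hgoodω : ∀ ω, ω ∉ A → Lnorm p (fun t => F (itil ω) t - f t) ≤ B := by
    intro ω hω
    have hZ : ∀ k, |Z k ω| ≤ κ * Lnorm 2 (ψ k) := by
      intro k
      have h1 : |Z k ω| / Lnorm 2 (ψ k) ≤ ⨆ k, |Z k ω| / Lnorm 2 (ψ k) :=
        le_ciSup (f := fun k => |Z k ω| / Lnorm 2 (ψ k)) (Set.finite_range _).bddAbove k
      have h2 : (⨆ k, |Z k ω| / Lnorm 2 (ψ k)) < κ := not_le.1 hω
      exact ((div_lt_iff₀ (h2pos k)).1 (h1.trans_lt h2)).le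
    have hMs : Mtil istar ω ≤ m + ε * κ * R := by
      rw [hM]
      refine ciSup_le fun k => ?_
      rw [div_le_iff₀ (hψpos k), hΔ]
      have h1 := (Lnorm_holder_aux hpq (mψ k) (mfF istar)).2
      have h2 : Lnorm 2 (ψ k) / Lnorm q (ψ k) ≤ R :=
        le_ciSup (f := fun k => Lnorm 2 (ψ k) / Lnorm q (ψ k)) (Set.finite_range _).bddAbove k
      rw [div_le_iff₀ (hψpos k)] at h2
      refine (abs_add_le _ _).trans ?_
      rw [abs_mul, abs_of_pos hε]
      have h3 : ε * |Z k ω| ≤ ε * (κ * (R * Lnorm q (ψ k))) := by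
        have := hZ k
        gcongr
        exact this.trans (by gcongr)
      calc _ ≤ Lnorm q (ψ k) * m + ε * (κ * (R * Lnorm q (ψ k))) := add_le_add h1 h3
        _ = _ := by ring
    by_cases hi : itil ω = istar
    · rw [hi, Lnorm_comm_aux, ← hm, hB]
      have : 0 ≤ 2 * S * m + 2 * κ * ε * S * R + γ := by positivity
      linarith
    · set i := itil ω with hidef
      set k := rep istar i with hk
      have hkS : Lnorm q (ψ k) ≤ S :=
        le_ciSup (f := fun j : {j : Fin N // j ≠ istar} => Lnorm q (ψ (rep istar j.1)))
          (Set.finite_range _).bddAbove ⟨i, hi⟩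
      have hΔM : ∀ j, |Δ j k ω| ≤ Mtil j ω * Lnorm q (ψ k) := by
        intro j
        rw [← div_le_iff₀ (hψpos k), hM]
        exact le_ciSup (f := fun k => |Δ j k ω| / Lnorm q (ψ k)) (Set.finite_range _).bddAbove k
      have hint : (∫ t, ψ k t * (F istar t - F i t) ∂(cubeMeasure d)) =
          Δ i k ω - Δ istar k ω := by
        rw [hΔ, hΔ, add_sub_add_right_eq_sub, ← integral_sub
          (Lnorm_holder_aux hpq (mψ k) (mfF i)).1 (Lnorm_holder_aux hpq (mψ k) (mfF istar)).1]
        congr 1; ext t; ring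
      have hg := (abs_le.1 (hgood istar i (Ne.symm hi))).1
      rw [← hk, hint] at hg
      have e1 := (abs_le.1 (hΔM i)).2
      have e2 := (abs_le.1 (hΔM istar)).1
      have e3 : Mtil i ω * Lnorm q (ψ k) ≤ Mtil istar ω * Lnorm q (ψ k) :=
        mul_le_mul_of_nonneg_right (hmin ω istar) (hψpos k).le
      have e4 : Mtil istar ω * Lnorm q (ψ k) ≤ (m + ε * κ * R) * S := by
        calc _ ≤ (m + ε * κ * R) * Lnorm q (ψ k) :=
              mul_le_mul_of_nonneg_right hMs (hψpos k).le
          _ ≤ _ := mul_le_mul_of_nonneg_left hkS (by positivity)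
      have e5 : Lnorm p (fun t => F i t - f t) ≤
          m + Lnorm p (fun t => F istar t - F i t) := by
        rw [Lnorm_comm_aux]
        have mg : MemLp (fun t => F i t - F istar t) p (cubeMeasure d) := (mF i).sub (mF istar)
        have := Lnorm_sub_aux hp (mfF istar) mg
        rw [Lnorm_comm_aux p (F i) (F istar)] at this
        refine le_trans (le_of_eq ?_) this
        congr 1; ext t; ring
      rw [hB]
      linarith
  have hint : Integrable (fun ω => B + A.indicator (fun _ => C) ω) P :=
    (integrable_const B).add ((integrable_const C).indicator hAm)
  calc ∫ ω, Lnorm p (fun t => F (itil ω) t - f t) ∂P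
      ≤ ∫ ω, (B + A.indicator (fun _ => C) ω) ∂P := by
        refine integral_mono_of_nonneg (Filter.Eventually.of_forall fun ω => Lnorm_nonneg_aux _ _)
          hint (Filter.Eventually.of_forall fun ω => ?_)
        by_cases hω : ω ∈ A
        · simp only [Set.indicator_of_mem hω]
          linarith [hbad (itil ω)]
        · simp only [Set.indicator_of_notMem hω]
          linarith [hgoodω ω hω]
    _ = B + (P A).toReal * C := by
        rw [integral_add (integrable_const B) ((integrable_const C).indicator hAm),
          integral_indicator_const C hAm]
        simp [Measure.real]
    _ ≤ B + C * δ := by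
        rw [mul_comm]
        gcongr
end
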